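/- Let n ≥ 1, 1 ≤ j ≤ n, let H be an n×n complex matrix, a ∈ ℂⁿ, and φ a (0,j)-coefficient system on ℂⁿ. Define the (0,j)-coefficient system w by w_I := Σ_{m∈I} σ^{m(I∖m)}_I a_m for strictly increasing I of length j (extended antisymmetrically), and set v_J := Σ_{m=1}^n a_m φ_{mJ} for strictly increasing J of length j−1. Then |Σ'_{|J|=j−1} Σ_{k,l=1}^n H_{lk} φ_{lJ} a_k| ≤ |Σ'_{|J|=j−1} Σ_{k,l=1}^n H_{lk} φ_{lJ} w_{kJ}| + 2n²·(max_{k,l} |H_{lk}|)·Σ'_{|J|=j−1} |v_J|. -/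

import Mathlib

open scoped BigOperators
open MeasureTheory

namespace HM

/-- The finset of strictly increasing multi-indices of length `q` with entries in `Fin n`. -/
def Incr (n q : ℕ) : Finset (Fin q → Fin n) :=
  Finset.univ.filter (fun I => ∀ a b : Fin q, a < b → I a < I b)

/-- Prepend the index `k` to a `(q-1)`-tuple `J`, giving the `q`-tuple `kJ`. -/
def cons' {n : ℕ} (q : ℕ) (k : Fin n) (J : Fin (q - 1) → Fin n) : Fin q → Fin n :=
  fun i => if h : (i : ℕ) = 0 then k else J ⟨(i : ℕ) - 1, by have := i.isLt; omega⟩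

/-- A (0,q)-coefficient system: an antisymmetric assignment of complex numbers to q-tuples
(hence vanishing on tuples with a repeated index). -/
def IsCoeff {n q : ℕ} (u : (Fin q → Fin n) → ℂ) : Prop :=
  ∀ (σ : Equiv.Perm (Fin q)) (I : Fin q → Fin n),
    u (I ∘ σ) = ((Equiv.Perm.sign σ : ℤ) : ℂ) * u I

/-- `|u|²`, the sum of `|u_I|²` over strictly increasing multi-indices `I`. -/
noncomputable def nSq {n q : ℕ} (u : (Fin q → Fin n) → ℂ) : ℝ :=
  ∑ I ∈ Incr n q, ‖u I‖ ^ 2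

/-- The Hessian form of a matrix `H` on coefficient systems:
`H(u,v) = Σ'_{|J|=q-1} Σ_{k,l} H_{lk} u_{lJ} conj(v_{kJ})`. -/
noncomputable def mForm {n : ℕ} (q : ℕ) (H : Matrix (Fin n) (Fin n) ℂ)
    (u v : (Fin q → Fin n) → ℂ) : ℂ :=
  ∑ J ∈ Incr n (q - 1), ∑ k : Fin n, ∑ l : Fin n,
    H l k * u (cons' q l J) * star (v (cons' q k J))

/-- `σ^I_J`: the sign of the permutation rearranging `I` into `J`; `0` if `J` is not a
rearrangement of `I` (in particular `0` if `I` has a repeated entry). -/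
def permSign {n p : ℕ} (I J : Fin p → Fin n) : ℤ :=
  if Function.Injective I then
    ∑ π : Equiv.Perm (Fin p), if J = I ∘ π then ((Equiv.Perm.sign π : ℤ)) else 0
  else 0

/-- The Wirtinger derivative `∂f/∂z_k` of a complex-valued function, via real Fréchet
derivatives: `½(∂f/∂x_k − i ∂f/∂y_k)`. -/
noncomputable def dz {n : ℕ} (f : (Fin n → ℂ) → ℂ) (k : Fin n) (z : Fin n → ℂ) : ℂ :=
  (1/2 : ℂ) * (fderiv ℝ f z (Pi.single k 1) - Complex.I * fderiv ℝ f z (Pi.single k Complex.I))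

/-- The Wirtinger derivative `∂f/∂z̄_k`: `½(∂f/∂x_k + i ∂f/∂y_k)`. -/
noncomputable def dzbar {n : ℕ} (f : (Fin n → ℂ) → ℂ) (k : Fin n) (z : Fin n → ℂ) : ℂ :=
  (1/2 : ℂ) * (fderiv ℝ f z (Pi.single k 1) + Complex.I * fderiv ℝ f z (Pi.single k Complex.I))

/-- The mixed Wirtinger Hessian `∂²f/∂z_l∂z̄_k` of a real-valued function. -/
noncomputable def hessW {n : ℕ} (f : (Fin n → ℂ) → ℝ) (l k : Fin n) (z : Fin n → ℂ) : ℂ :=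
  dz (fun w => dzbar (fun y => (f y : ℂ)) k w) l z

/-- The Hessian form `i∂∂̄f(u,u)(z) = Σ'_{|J|=q-1} Σ_{k,l} ∂²f/∂z_l∂z̄_k(z) u_{lJ} conj(u_{kJ})`. -/
noncomputable def hForm {n : ℕ} (q : ℕ) (f : (Fin n → ℂ) → ℝ)
    (u : (Fin q → Fin n) → ℂ) (z : Fin n → ℂ) : ℂ :=
  ∑ J ∈ Incr n (q - 1), ∑ k : Fin n, ∑ l : Fin n,
    hessW f l k z * u (cons' q l J) * star (u (cons' q k J))

/-- Coefficient of `∂̄u` on the `(q+1)`-tuple `M`: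
`(∂̄u)_M = Σ_k Σ'_{|J|=q} σ^{kJ}_M ∂u_J/∂z̄_k`. -/
noncomputable def dbarC {n : ℕ} (q : ℕ) (u : (Fin q → Fin n) → (Fin n → ℂ) → ℂ)
    (M : Fin (q + 1) → Fin n) (z : Fin n → ℂ) : ℂ :=
  ∑ k : Fin n, ∑ J ∈ Incr n q, ((permSign (cons' (q + 1) k J) M : ℤ) : ℂ) * dzbar (u J) k z

/-- Coefficient of `ϑu` on the `(q-1)`-tuple `J`: `(ϑu)_J = −Σ_l ∂u_{lJ}/∂z_l`. -/
noncomputable def thetaC {n : ℕ} (q : ℕ) (u : (Fin q → Fin n) → (Fin n → ℂ) → ℂ)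
    (J : Fin (q - 1) → Fin n) (z : Fin n → ℂ) : ℂ :=
  -∑ l : Fin n, dz (u (cons' q l J)) l z

/-- Pointwise `|∂̄u|²`. -/
noncomputable def dbarSq {n : ℕ} (q : ℕ) (u : (Fin q → Fin n) → (Fin n → ℂ) → ℂ)
    (z : Fin n → ℂ) : ℝ :=
  ∑ M ∈ Incr n (q + 1), ‖dbarC q u M z‖ ^ 2

/-- Pointwise `|ϑu|²`. -/
noncomputable def thetaSq {n : ℕ} (q : ℕ) (u : (Fin q → Fin n) → (Fin n → ℂ) → ℂ)
    (z : Fin n → ℂ) : ℝ :=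
  ∑ J ∈ Incr n (q - 1), ‖thetaC q u J z‖ ^ 2

/-- Remove the `i`-th entry of a `j`-tuple, giving a `(j-1)`-tuple. -/
def removeIdx {n j : ℕ} (I : Fin j → Fin n) (i : Fin j) : Fin (j - 1) → Fin n :=
  fun t => if (t : ℕ) < (i : ℕ) then I ⟨t, by have := t.isLt; omega⟩
    else I ⟨(t : ℕ) + 1, by have := t.isLt; omega⟩

/-- The increasing `j`-tuple listing a finset `S` (with default `d` out of range). -/
def sortedTuple {n : ℕ} (j : ℕ) (S : Finset (Fin n)) (d : Fin n) : Fin j → Fin n :=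
  fun t => (S.sort (· ≤ ·)).getD t d

end HM

/-!
Let `θ = Σ' dz̄^I`, the coefficient system equal to `1` on every increasing multi-index, so that
`w = a ∧ θ`.  Expanding the wedge product along its first index gives
`w_{kJ} = a_k θ_J + Σ_i (-1)^{i+1} a_{J_i} θ_{k(J∖J_i)}`.  In `φ_{lJ}`, moving the index `m = J_i`
to the front produces the same sign `(-1)^{i+1}` (positions are counted from `0`); reading the pairs
`(J, i)` as pairs `(m, K)` with `K = J∖m`, one obtains
`Σ'_J φ_{lJ} w_{kJ} = a_k Σ'_J φ_{lJ} θ_J + Σ'_K v_{lK} θ_{kK}`.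
As `|θ| ≤ 1` and every increasing `J` arises from `j - 1` pairs `(l, K)`, the last term contributes
at most `n (j - 1) max|H| Σ'_J |v_J|` to the pairing with `H`.
-/

namespace HM

section IncreasingTuples

variable {n q : ℕ}

lemma mem_Incr {I : Fin q → Fin n} : I ∈ Incr n q ↔ StrictMono I := by
  simp [Incr, StrictMono]

lemma exists_perm_strictMono_comp {α : Type*} [LinearOrder α] {I : Fin q → α}
    (hI : Function.Injective I) : ∃ σ : Equiv.Perm (Fin q), StrictMono (I ∘ σ) :=
  ⟨Tuple.sort I, (Tuple.monotone_sort I).strictMono_of_injective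
    (hI.comp (Tuple.sort I).injective)⟩

lemma range_removeNth {α : Type*} {J : Fin (q + 1) → α} (hJ : Function.Injective J)
    (i : Fin (q + 1)) : Set.range (i.removeNth J) = Set.range J \ {J i} := by
  change Set.range (J ∘ i.succAbove) = _
  rw [Set.range_comp, Fin.range_succAbove, Set.compl_eq_univ_sdiff, Set.image_sdiff hJ,
    Set.image_univ, Set.image_singleton]

lemma exists_strictMono_removeNth_eq {α : Type*} [LinearOrder α] {K : Fin q → α}
    (hK : StrictMono K) {m : α} (hm : m ∉ Set.range K) :
    ∃ (J : Fin (q + 1) → α) (i : Fin (q + 1)), StrictMono J ∧ J i = m ∧ i.removeNth J = K := by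
  obtain ⟨σ, hσ⟩ := exists_perm_strictMono_comp (Fin.cons_injective_iff.2 ⟨hm, hK.injective⟩)
  have hi : (Fin.cons m K ∘ σ : Fin (q + 1) → α) (σ.symm 0) = m := by simp
  refine ⟨_, σ.symm 0, hσ, hi, (StrictMono.range_inj (hσ.removeNth _) hK).1 ?_⟩
  rw [range_removeNth hσ.injective, hi, σ.surjective.range_comp, Fin.range_cons,
    Set.insert_sdiff_self_of_notMem hm]

lemma sum_Incr_sum_removeNth {M : Type*} [AddCommMonoid M] (G : Fin n → (Fin q → Fin n) → M)
    (hG : ∀ m K, m ∈ Set.range K → G m K = 0) :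
    ∑ J ∈ Incr n (q + 1), ∑ i, G (J i) (i.removeNth J) = ∑ K ∈ Incr n q, ∑ m, G m K := by
  classical
  have hdrop : ∀ K, ∑ m, G m K = ∑ m with m ∉ Set.range K, G m K := fun K => by
    rw [Finset.sum_filter_of_ne]
    exact fun m _ hm hmK => hm (hG m K hmK)
  simp only [hdrop]
  rw [Finset.sum_sigma', Finset.sum_sigma']
  refine Finset.sum_bij (fun p _ => ⟨p.2.removeNth p.1, p.1 p.2⟩) ?_ ?_ ?_ fun _ _ => rfl
  · rintro ⟨J, i⟩ hJ
    have hJ : StrictMono J := by simpa [mem_Incr] using hJ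
    simp [mem_Incr, hJ.removeNth, range_removeNth hJ.injective, -Set.mem_range]
  · rintro ⟨J, i⟩ hJ ⟨J', i'⟩ hJ' h
    have hJ : StrictMono J := by simpa [mem_Incr] using hJ
    have hJ' : StrictMono J' := by simpa [mem_Incr] using hJ'
    obtain ⟨hK, hm⟩ : i.removeNth J = i'.removeNth J' ∧ J i = J' i' := by simpa using h
    have hrange : Set.range J = Set.range J' := by
      rw [← Set.insert_sdiff_self_of_mem (Set.mem_range_self (f := J) i),
        ← Set.insert_sdiff_self_of_mem (Set.mem_range_self (f := J') i'),
        ← range_removeNth hJ.injective, ← range_removeNth hJ'.injective, hK, hm]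
    obtain rfl := (hJ.range_inj hJ').1 hrange
    obtain rfl := hJ.injective hm
    rfl
  · rintro ⟨K, m⟩ hKm
    obtain ⟨hK, hm⟩ : StrictMono K ∧ m ∉ Set.range K := by simpa [mem_Incr] using hKm
    obtain ⟨J, i, hJ, rfl, rfl⟩ := exists_strictMono_removeNth_eq hK hm
    exact ⟨⟨J, i⟩, by simpa [mem_Incr] using hJ, rfl⟩

end IncreasingTuples

section Antisymmetry

variable {n q : ℕ} {u v : (Fin q → Fin n) → ℂ}

lemma IsCoeff.eq_zero_of_not_injective (hu : IsCoeff u) {I : Fin q → Fin n}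
    (hI : ¬ Function.Injective I) : u I = 0 := by
  obtain ⟨x, y, hxy, hne⟩ := Function.not_injective_iff.1 hI
  have hswap : I ∘ Equiv.swap x y = I := by
    rw [Equiv.comp_swap_eq_update, hxy, Function.update_eq_self, ← hxy, Function.update_eq_self]
  have h := hu (Equiv.swap x y) I
  rw [hswap, Equiv.Perm.sign_swap hne] at h
  simpa [self_eq_neg] using h

lemma IsCoeff.ext_Incr (hu : IsCoeff u) (hv : IsCoeff v) (h : ∀ I ∈ Incr n q, u I = v I) :
    u = v := by
  funext I
  by_cases hI : Function.Injective I
  · obtain ⟨σ, hσ⟩ := exists_perm_strictMono_comp hI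
    have hσI := h _ (mem_Incr.2 hσ)
    rw [hu, hv] at hσI
    exact mul_left_cancel₀ (by simp) hσI
  · rw [hu.eq_zero_of_not_injective hI, hv.eq_zero_of_not_injective hI]

lemma IsCoeff.norm_comp_perm (hu : IsCoeff u) (σ : Equiv.Perm (Fin q)) (I : Fin q → Fin n) :
    ‖u (I ∘ σ)‖ = ‖u I‖ := by
  rcases Int.units_eq_one_or (Equiv.Perm.sign σ) with h | h <;> simp [hu σ I, h]

lemma IsCoeff.norm_le (hu : IsCoeff u) {C : ℝ} (hC : 0 ≤ C) (h : ∀ I ∈ Incr n q, ‖u I‖ ≤ C)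
    (I : Fin q → Fin n) : ‖u I‖ ≤ C := by
  by_cases hI : Function.Injective I
  · obtain ⟨σ, hσ⟩ := exists_perm_strictMono_comp hI
    exact hu.norm_comp_perm σ I ▸ h _ (mem_Incr.2 hσ)
  · rwa [hu.eq_zero_of_not_injective hI, norm_zero]

variable {φ : (Fin (q + 1) → Fin n) → ℂ}

lemma IsCoeff.apply_insertNth (hφ : IsCoeff φ) (p : Fin (q + 1)) (m : Fin n) (K : Fin q → Fin n) :
    φ (p.insertNth m K) = (-1) ^ (p : ℕ) * φ (Fin.cons m K) := by
  rw [← Fin.cons_comp_cycleRange, hφ, Fin.sign_cycleRange]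
  simp

lemma IsCoeff.norm_cons_removeNth (hφ : IsCoeff φ) (p : Fin (q + 1)) (I : Fin (q + 1) → Fin n) :
    ‖φ (Fin.cons (I p) (p.removeNth I))‖ = ‖φ I‖ := by
  rw [Fin.cons_removeNth_eq_comp_cycleRange_symm, hφ.norm_comp_perm]

lemma IsCoeff.cons_eq_zero (hφ : IsCoeff φ) {m : Fin n} {K : Fin q → Fin n}
    (hm : m ∈ Set.range K) : φ (Fin.cons m K) = 0 :=
  hφ.eq_zero_of_not_injective fun h => (Fin.cons_injective_iff.1 h).1 hm

lemma IsCoeff.sum_norm_cons (hφ : IsCoeff φ) :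
    ∑ K ∈ Incr n q, ∑ m, ‖φ (Fin.cons m K)‖ = (q + 1) * ∑ J ∈ Incr n (q + 1), ‖φ J‖ := by
  rw [← sum_Incr_sum_removeNth (fun m K => ‖φ (Fin.cons m K)‖)
    fun m K hm => by rw [hφ.cons_eq_zero hm, norm_zero], Finset.mul_sum]
  simp [hφ.norm_cons_removeNth]

lemma IsCoeff.comp_cons (hφ : IsCoeff φ) (l : Fin n) : IsCoeff fun J => φ (Fin.cons l J) := by
  intro σ J
  have hcons : (Fin.cons l (J ∘ σ) : Fin (q + 1) → Fin n) =
      Fin.cons l J ∘ Equiv.Perm.decomposeFin.symm (0, σ) := by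
    funext x
    cases x using Fin.cases <;> simp
  beta_reduce
  rw [hcons, hφ, Equiv.Perm.decomposeFin.symm_sign, if_pos rfl, one_mul]

end Antisymmetry

section AlternatingForms

variable {n q : ℕ}

lemma isCoeff_alternatingMap (ω : (Fin n → ℂ) [⋀^Fin q]→ₗ[ℂ] ℂ) :
    IsCoeff fun I => ω fun i => Pi.single (I i) 1 := by
  intro σ I
  change ω ((fun i => Pi.single (I i) 1) ∘ σ) = _
  rw [ω.map_perm, Units.smul_def, zsmul_eq_mul]

/-- The elementary form `dz̄^I`: it maps `q` vectors to the determinant of their coordinates with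
indices in `I`. -/
def elementaryForm (R : Type*) [CommRing R] (I : Fin q → Fin n) :
    (Fin n → R) [⋀^Fin q]→ₗ[R] R :=
  Matrix.detRowAlternating.compLinearMap (LinearMap.funLeft R R I)

lemma elementaryForm_single {R : Type*} [CommRing R] {I J : Fin q → Fin n} (hI : StrictMono I)
    (hJ : StrictMono J) :
    elementaryForm R I (fun i => Pi.single (J i) 1) = if I = J then 1 else 0 := by
  have happly : elementaryForm R I (fun i => Pi.single (J i) 1) =
      Matrix.det (Matrix.of fun r c => (Pi.single (J r) 1 : Fin n → R) (I c)) := rfl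
  rw [happly]
  split_ifs with hIJ
  · subst hIJ
    convert Matrix.det_one (n := Fin q) (R := R)
    ext r c
    simp [Pi.single_apply, Matrix.one_apply, hI.injective.eq_iff, eq_comm]
  · obtain ⟨r, hr⟩ : ∃ r, J r ∉ Set.range I := by
      by_contra! hsub
      refine hIJ ((hI.range_inj hJ).1 (Set.eq_of_subset_of_ncard_le
        (Set.range_subset_iff.2 hsub) ?_).symm)
      simp [Set.ncard_range_of_injective hI.injective, Set.ncard_range_of_injective hJ.injective]
    refine Matrix.det_eq_zero_of_row_eq_zero r fun c => ?_
    exact Pi.single_eq_of_ne (fun h => hr ⟨c, h⟩) 1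

lemma exists_alternatingMap_eq_on_Incr {R : Type*} [CommRing R] (c : (Fin q → Fin n) → R) :
    ∃ ω : (Fin n → R) [⋀^Fin q]→ₗ[R] R,
      ∀ J ∈ Incr n q, ω (fun i => Pi.single (J i) 1) = c J := by
  refine ⟨∑ I ∈ Incr n q, c I • elementaryForm R I, fun J hJ => ?_⟩
  change AlternatingMap.toMultilinearMapLM (S := R) _ _ = _
  rw [map_sum, sum_apply, Finset.sum_eq_single_of_mem J hJ]
  · simp [elementaryForm_single (mem_Incr.1 hJ) (mem_Incr.1 hJ)]
  · intro I hI hne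
    simp [elementaryForm_single (mem_Incr.1 hI) (mem_Incr.1 hJ), hne]

lemma exists_isCoeff_eq_on_Incr (c : (Fin q → Fin n) → ℂ) :
    ∃ u : (Fin q → Fin n) → ℂ, IsCoeff u ∧ ∀ I ∈ Incr n q, u I = c I :=
  have ⟨ω, hω⟩ := exists_alternatingMap_eq_on_Incr c
  ⟨_, isCoeff_alternatingMap ω, hω⟩

lemma IsCoeff.exists_alternatingMap {u : (Fin q → Fin n) → ℂ} (hu : IsCoeff u) :
    ∃ ω : (Fin n → ℂ) [⋀^Fin q]→ₗ[ℂ] ℂ, ∀ I, u I = ω fun i => Pi.single (I i) 1 :=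
  have ⟨ω, hω⟩ := exists_alternatingMap_eq_on_Incr u
  ⟨ω, congrFun (hu.ext_Incr (isCoeff_alternatingMap ω) fun I hI => (hω I hI).symm)⟩

end AlternatingForms

section Wedge

variable {n q : ℕ}

/-- The coefficients of the wedge product `a ∧ u` of a `(0,1)`-form `a` and a `(0,q)`-form `u`,
as a sum over the position of the index given to `a`. -/
def wedge (a : Fin n → ℂ) (u : (Fin q → Fin n) → ℂ) (I : Fin (q + 1) → Fin n) : ℂ :=
  ∑ p : Fin (q + 1), (-1) ^ (p : ℕ) * (a (I p) * u (p.removeNth I))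

lemma IsCoeff.wedge {u : (Fin q → Fin n) → ℂ} (hu : IsCoeff u) (a : Fin n → ℂ) :
    IsCoeff (wedge a u) := by
  obtain ⟨ω, hω⟩ := hu.exists_alternatingMap
  let α : (Fin n → ℂ) →ₗ[ℂ] ℂ := Fintype.linearCombination ℂ a
  convert isCoeff_alternatingMap (AlternatingMap.alternatizeUncurryFin (α.smulRight ω)) with I
  simp only [AlternatingMap.alternatizeUncurryFin_apply, HM.wedge, hω]
  refine Finset.sum_congr rfl fun p _ => ?_
  have hrem : (p.removeNth fun i => (Pi.single (I i) 1 : Fin n → ℂ)) =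
      fun i => Pi.single (p.removeNth I i) 1 := rfl
  simp [α, Fintype.linearCombination_apply_single, hrem]

lemma wedge_cons_zero (a : Fin n → ℂ) (u : (Fin 0 → Fin n) → ℂ) (k : Fin n) (J : Fin 0 → Fin n) :
    wedge a u (Fin.cons k J) = a k * u J := by
  simp [wedge]

lemma wedge_cons_succ (a : Fin n → ℂ) (u : (Fin (q + 1) → Fin n) → ℂ) (k : Fin n)
    (J : Fin (q + 1) → Fin n) :
    wedge a u (Fin.cons k J) = a k * u J +
      ∑ i : Fin (q + 1), (-1) ^ (i + 1 : ℕ) * (a (J i) * u (Fin.cons k (i.removeNth J))) := by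
  have hrem : ∀ i : Fin (q + 1),
      i.succ.removeNth (Fin.cons k J : Fin (q + 2) → Fin n) = Fin.cons k (i.removeNth J) :=
    fun i => Fin.cons_comp_succ_succAbove _ _ _
  simp [wedge, Fin.sum_univ_succ (n := q + 1), hrem]

/-- The coefficients `v_J = Σ_m a_m φ_{mJ}` of the contraction of the `(0,q+1)`-form `φ`
with the vector `a`. -/
def contract (a : Fin n → ℂ) (φ : (Fin (q + 1) → Fin n) → ℂ) (J : Fin q → Fin n) : ℂ :=
  ∑ m, a m * φ (Fin.cons m J)

lemma IsCoeff.contract {φ : (Fin (q + 1) → Fin n) → ℂ} (hφ : IsCoeff φ) (a : Fin n → ℂ) :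
    IsCoeff (contract a φ) := by
  intro σ J
  simp only [HM.contract, Finset.mul_sum]
  exact Finset.sum_congr rfl fun m _ => by
    rw [show φ (Fin.cons m (J ∘ σ)) = _ from hφ.comp_cons m σ J, mul_left_comm]

lemma IsCoeff.sum_Incr_mul_wedge {φ : (Fin (q + 2) → Fin n) → ℂ} (hφ : IsCoeff φ) (a : Fin n → ℂ)
    (u : (Fin (q + 1) → Fin n) → ℂ) (k l : Fin n) :
    ∑ J ∈ Incr n (q + 1), φ (Fin.cons l J) * HM.wedge a u (Fin.cons k J) =
      ∑ J ∈ Incr n (q + 1), φ (Fin.cons l J) * (a k * u J) +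
        ∑ K ∈ Incr n q, HM.contract a φ (Fin.cons l K) * u (Fin.cons k K) := by
  have hmove : ∀ (J : Fin (q + 1) → Fin n) (i : Fin (q + 1)), φ (Fin.cons l J) =
      (-1) ^ (i + 1 : ℕ) * φ (Fin.cons (J i) (Fin.cons l (i.removeNth J))) := by
    intro J i
    rw [← Fin.val_succ, ← hφ.apply_insertNth]
    congr 1
    exact (Fin.eq_insertNth_iff.2 ⟨rfl, Fin.cons_comp_succ_succAbove _ _ _⟩)
  have hterm : ∀ (J : Fin (q + 1) → Fin n) (i : Fin (q + 1)),
      φ (Fin.cons l J) * ((-1) ^ (i + 1 : ℕ) * (a (J i) * u (Fin.cons k (i.removeNth J)))) =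
        a (J i) * φ (Fin.cons (J i) (Fin.cons l (i.removeNth J))) *
          u (Fin.cons k (i.removeNth J)) := by
    intro J i
    have hsign : ((-1) ^ (i + 1 : ℕ) * (-1) ^ (i + 1 : ℕ) : ℂ) = 1 := by
      rw [← mul_pow]; simp
    rw [hmove J i]
    linear_combination (a (J i) * φ (Fin.cons (J i) (Fin.cons l (i.removeNth J))) *
      u (Fin.cons k (i.removeNth J))) * hsign
  simp only [wedge_cons_succ, mul_add, Finset.sum_add_distrib, Finset.mul_sum, hterm,
    HM.contract, Finset.sum_mul]
  congr 1
  refine sum_Incr_sum_removeNth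
    (fun m K => a m * φ (Fin.cons m (Fin.cons l K)) * u (Fin.cons k K)) fun m K hm => ?_
  rw [hφ.cons_eq_zero (by rw [Fin.range_cons]; exact Set.mem_insert_of_mem l hm)]
  simp

lemma IsCoeff.sum_norm_sum_Incr_mul_wedge_sub_le {φ : (Fin (q + 1) → Fin n) → ℂ} (hφ : IsCoeff φ)
    (a : Fin n → ℂ) {u : (Fin q → Fin n) → ℂ} {C : ℝ} (hC : ∀ I, ‖u I‖ ≤ C) (k : Fin n) :
    ∑ l, ‖∑ J ∈ Incr n q, φ (Fin.cons l J) * (HM.wedge a u (Fin.cons k J) - a k * u J)‖ ≤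
      q * C * ∑ J ∈ Incr n q, ‖HM.contract a φ J‖ := by
  cases q with
  | zero => simp [wedge_cons_zero]
  | succ q =>
    calc ∑ l, ‖∑ J ∈ Incr n (q + 1),
          φ (Fin.cons l J) * (HM.wedge a u (Fin.cons k J) - a k * u J)‖
        = ∑ l, ‖∑ K ∈ Incr n q, HM.contract a φ (Fin.cons l K) * u (Fin.cons k K)‖ := by
          simp only [mul_sub, Finset.sum_sub_distrib, hφ.sum_Incr_mul_wedge, add_sub_cancel_left]
      _ ≤ ∑ l, ∑ K ∈ Incr n q, ‖HM.contract a φ (Fin.cons l K)‖ * C :=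
          Finset.sum_le_sum fun l _ => norm_sum_le_of_le _ fun K _ => by
            rw [norm_mul]
            gcongr
            exact hC _
      _ = (q + 1 : ℕ) * C * ∑ J ∈ Incr n (q + 1), ‖HM.contract a φ J‖ := by
          rw [Finset.sum_comm]
          simp only [← Finset.sum_mul]
          rw [(hφ.contract a).sum_norm_cons]
          push_cast
          ring

end Wedge

section Pairing

variable {n q : ℕ}

lemma norm_matrix_apply_le_iSup_iSup {ι κ E : Type*} [Finite ι] [Finite κ]
    [SeminormedAddGroup E] (H : Matrix ι κ E) (l : ι) (k : κ) : ‖H l k‖ ≤ ⨆ k, ⨆ l, ‖H l k‖ :=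
  Finite.le_ciSup_of_le k (Finite.le_ciSup (fun l => ‖H l k‖) l)

lemma norm_sum_matrix_mul_mul_le {ι κ τ R : Type*} [Fintype ι] [Fintype κ]
    [NonUnitalSeminormedRing R] {H : Matrix ι κ R} {M : ℝ} (hM : ∀ l k, ‖H l k‖ ≤ M)
    (s : Finset τ) (f : ι → τ → R) (g : κ → τ → R) :
    ‖∑ J ∈ s, ∑ k, ∑ l, H l k * f l J * g k J‖ ≤ ∑ k, M * ∑ l, ‖∑ J ∈ s, f l J * g k J‖ := by
  have hswap : ∑ J ∈ s, ∑ k, ∑ l, H l k * f l J * g k J =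
      ∑ k, ∑ l, H l k * ∑ J ∈ s, f l J * g k J := by
    simp only [Finset.mul_sum, mul_assoc]
    rw [Finset.sum_comm]
    exact Finset.sum_congr rfl fun k _ => Finset.sum_comm
  rw [hswap]
  refine norm_sum_le_of_le _ fun k _ => ?_
  rw [Finset.mul_sum]
  refine norm_sum_le_of_le _ fun l _ => (norm_mul_le _ _).trans ?_
  gcongr
  exact hM l k

lemma IsCoeff.norm_pairing_le_add {φ : (Fin (q + 1) → Fin n) → ℂ} (hφ : IsCoeff φ)
    (a : Fin n → ℂ) {u : (Fin q → Fin n) → ℂ} {C : ℝ} (hC : ∀ I, ‖u I‖ ≤ C)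
    {H : Matrix (Fin n) (Fin n) ℂ} {M : ℝ} (hM : ∀ l k, ‖H l k‖ ≤ M) :
    ‖∑ J ∈ Incr n q, ∑ k, ∑ l, H l k * φ (Fin.cons l J) * (a k * u J)‖ ≤
      ‖∑ J ∈ Incr n q, ∑ k, ∑ l, H l k * φ (Fin.cons l J) * HM.wedge a u (Fin.cons k J)‖ +
        n * q * M * C * ∑ J ∈ Incr n q, ‖HM.contract a φ J‖ := by
  refine (norm_le_norm_add_norm_sub _ _).trans (add_le_add_right ?_ _)
  calc _ = ‖∑ J ∈ Incr n q, ∑ k, ∑ l,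
          H l k * φ (Fin.cons l J) * (HM.wedge a u (Fin.cons k J) - a k * u J)‖ := by
        simp only [mul_sub, Finset.sum_sub_distrib]
    _ ≤ ∑ k, M * ∑ l, ‖∑ J ∈ Incr n q,
          φ (Fin.cons l J) * (HM.wedge a u (Fin.cons k J) - a k * u J)‖ :=
        norm_sum_matrix_mul_mul_le hM _ (fun l J => φ (Fin.cons l J))
          fun k J => HM.wedge a u (Fin.cons k J) - a k * u J
    _ ≤ ∑ _k : Fin n, M * (q * C * ∑ J ∈ Incr n q, ‖HM.contract a φ J‖) :=
        Finset.sum_le_sum fun k _ => mul_le_mul_of_nonneg_left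
          (hφ.sum_norm_sum_Incr_mul_wedge_sub_le a hC k) ((norm_nonneg _).trans (hM k k))
    _ = _ := by
        rw [Finset.sum_const, Finset.card_univ, Fintype.card_fin, nsmul_eq_mul]
        ring

end Pairing

section TupleOperations

variable {n q : ℕ}

lemma cons'_succ (k : Fin n) (J : Fin q → Fin n) :
    cons' (q + 1) k J = (Fin.cons k J : Fin (q + 1) → Fin n) := by
  funext i
  cases i using Fin.cases <;> simp [cons']

lemma removeIdx_eq_removeNth (I : Fin (q + 1) → Fin n) (i : Fin (q + 1)) :
    removeIdx I i = i.removeNth I := by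
  funext t
  simp only [removeIdx, Fin.removeNth_apply, Fin.succAbove, Fin.lt_def, Fin.val_castSucc]
  split_ifs <;> rfl

lemma permSign_comp_perm {I : Fin q → Fin n} (hI : Function.Injective I)
    (σ : Equiv.Perm (Fin q)) : permSign (I ∘ σ) I = Equiv.Perm.sign σ := by
  have hiff : ∀ π : Equiv.Perm (Fin q), I = (I ∘ σ) ∘ π ↔ π = σ⁻¹ := fun π => by
    rw [← mul_eq_one_iff_eq_inv', Equiv.ext_iff, funext_iff]
    exact forall_congr' fun x => hI.eq_iff.trans eq_comm
  simp [permSign, hI.comp σ.injective, hiff]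

lemma permSign_cons'_removeIdx {I : Fin (q + 1) → Fin n} (hI : Function.Injective I)
    (i : Fin (q + 1)) : permSign (cons' (q + 1) (I i) (removeIdx I i)) I = (-1) ^ (i : ℕ) := by
  have hcycle : cons' (q + 1) (I i) (removeIdx I i) = I ∘ i.cycleRange.symm := by
    rw [removeIdx_eq_removeNth]
    exact (cons'_succ _ _).trans (Fin.cons_removeNth_eq_comp_cycleRange_symm I i)
  rw [hcycle, permSign_comp_perm hI]
  simp

lemma wedge_eq_sum_permSign (a : Fin n → ℂ) {u : (Fin q → Fin n) → ℂ}
    (hu : ∀ J ∈ Incr n q, u J = 1) {I : Fin (q + 1) → Fin n} (hI : I ∈ Incr n (q + 1)) :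
    wedge a u I =
      ∑ i, ((permSign (cons' (q + 1) (I i) (removeIdx I i)) I : ℤ) : ℂ) * a (I i) := by
  have hI_mono := mem_Incr.1 hI
  have hu_rem : ∀ i : Fin (q + 1), u (i.removeNth I) = 1 := fun i =>
    hu _ (mem_Incr.2 (hI_mono.removeNth i))
  simp [wedge, hu_rem, permSign_cons'_removeIdx hI_mono.injective]

end TupleOperations

end HM


/-- the estimate of Lemma 4.3: passing from `a` to the form `w = ∂̄(r Σ' dz̄^J)`
costs at most `2n²·max|H|·Σ'|v_J|`. -/
theorem hessian_pairing_estimate (n j : ℕ) (hn : 1 ≤ n) (hj1 : 1 ≤ j) (hjn : j ≤ n)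
    (H : Matrix (Fin n) (Fin n) ℂ) (a : Fin n → ℂ)
    (φ : (Fin j → Fin n) → ℂ) (hφ : HM.IsCoeff φ)
    (w : (Fin j → Fin n) → ℂ) (hw : HM.IsCoeff w)
    (hwdef : ∀ I ∈ HM.Incr n j, w I = ∑ i : Fin j,
      ((HM.permSign (HM.cons' j (I i) (HM.removeIdx I i)) I : ℤ) : ℂ) * a (I i)) :
    ‖∑ J ∈ HM.Incr n (j - 1), ∑ k : Fin n, ∑ l : Fin n,
        H l k * φ (HM.cons' j l J) * a k‖ ≤
      ‖∑ J ∈ HM.Incr n (j - 1), ∑ k : Fin n, ∑ l : Fin n,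
          H l k * φ (HM.cons' j l J) * w (HM.cons' j k J)‖ +
        2 * n ^ 2 * (⨆ k : Fin n, ⨆ l : Fin n, ‖H l k‖) *
          ∑ J ∈ HM.Incr n (j - 1), ‖∑ m : Fin n, a m * φ (HM.cons' j m J)‖ := by
  obtain ⟨q, rfl⟩ : ∃ q, j = q + 1 := ⟨j - 1, by omega⟩
  obtain ⟨θ, hθ, hθ_one⟩ := HM.exists_isCoeff_eq_on_Incr (n := n) (q := q) fun _ => 1
  have hw_eq : w = HM.wedge a θ := hw.ext_Incr (hθ.wedge a) fun I hI =>
    (hwdef I hI).trans (HM.wedge_eq_sum_permSign a hθ_one hI).symm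
  have hθ_norm : ∀ I, ‖θ I‖ ≤ 1 := hθ.norm_le zero_le_one fun I hI => by simp [hθ_one I hI]
  have hM : 0 ≤ ⨆ k : Fin n, ⨆ l : Fin n, ‖H l k‖ :=
    Real.iSup_nonneg fun k => Real.iSup_nonneg fun l => norm_nonneg _
  have hconst : (n * q : ℝ) ≤ 2 * n ^ 2 := by
    exact_mod_cast (by nlinarith : n * q ≤ 2 * n ^ 2)
  simp only [HM.cons'_succ, hw_eq]
  calc _ = ‖∑ J ∈ HM.Incr n q, ∑ k, ∑ l, H l k * φ (Fin.cons l J) * (a k * θ J)‖ := by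
        congr 1
        exact Finset.sum_congr rfl fun J hJ => by simp [hθ_one J hJ]
    _ ≤ _ := hφ.norm_pairing_le_add a hθ_norm (HM.norm_matrix_apply_le_iSup_iSup H)
    _ ≤ _ := by
        rw [mul_one]
        gcongr <;> rfl
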